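/- Fix n, d ∈ ℕ, 1 < p < ∞, T > 0, x ∈ ℝ^n, and smooth vector fields X_0, X_1, …, X_d : ℝ^n → ℝ^n that are bounded and have bounded first and second derivatives. Let F : L^p([0,T], ℝ^d) → ℝ^n be the endpoint map F(u) = γ_u(T), where γ_u is the trajectory of u starting at x; F is Fréchet differentiable at every point. If a sequence u_n converges weakly to u in L^p([0,T], ℝ^d), then for every v ∈ L^p([0,T], ℝ^d) the differentials satisfy d_{u_n}F(v) → d_uF(v) in ℝ^n. -/

import Mathlib

open MeasureTheory Set Filter Topology

noncomputable section

/-- Trajectory on `[0,T]` of a control `u` starting at `x` for the affine control system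
determined by `X₀, X₁, …, X_d`. -/
def IsTrajectory {n d : ℕ}
    (X0 : EuclideanSpace ℝ (Fin n) → EuclideanSpace ℝ (Fin n))
    (X : Fin d → EuclideanSpace ℝ (Fin n) → EuclideanSpace ℝ (Fin n))
    (x : EuclideanSpace ℝ (Fin n)) (T : ℝ)
    (u : ℝ → EuclideanSpace ℝ (Fin d))
    (γ : ℝ → EuclideanSpace ℝ (Fin n)) : Prop :=
  ContinuousOn γ (Set.Icc 0 T) ∧
    ∀ t ∈ Set.Icc (0:ℝ) T,
      γ t = x + ∫ s in (0:ℝ)..t, (X0 (γ s) + ∑ i, u s i • X i (γ s))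

open scoped NNReal ENNReal

/-!
The linearized control system is never written down. Two facts about the endpoint map `F` suffice.
First, second differences are quadratically small, `‖F (u + 2v) - 2 F (u + v) + F u‖ ≤ C ‖v‖²`, with
one constant `C` on each ball of controls. Comparing the difference quotients
`(F (u + tv) - F u) / t` at `t`, `t / 2`, `t / 4`, … then shows that they converge to `d_u F(v)` at
a rate uniform in `u` on balls, in particular along a weakly convergent (hence bounded) sequence
`u_k`. Second, `F` is weakly sequentially continuous, so each quotient at fixed `t` passes to the
weak limit; uniformity lets the two limits be interchanged.

For the second fact, the defect of a reference trajectory `γ₀` as a trajectory of the control `u_k`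
is `∫₀ᵗ B(γ₀) (u_k - u₀)`. It is linear in the control, with a functional depending Hölder
continuously on `t` since `p > 1`, so it tends to `0` uniformly in `t`; Grönwall's inequality
concludes. Grönwall is also what yields the second difference bound.
-/

/-! ### Grönwall's inequality with an integrable rate -/

theorem absolutelyContinuousOnInterval_contDiff_comp {f g : ℝ → ℝ} {a b : ℝ}
    (hg : ContDiff ℝ 1 g) (hf : AbsolutelyContinuousOnInterval f a b) :
    AbsolutelyContinuousOnInterval (fun t => g (f t)) a b := by
  obtain ⟨C, hC⟩ := hf.exists_bound
  obtain ⟨K, hK⟩ :=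
    hg.contDiffOn.exists_lipschitzOnWith one_ne_zero (convex_Icc (-C) C) isCompact_Icc
  have hmem : ∀ t ∈ uIcc a b, f t ∈ Icc (-C) C := fun t ht => abs_le.1 (hC t ht)
  refine squeeze_zero' (.of_forall fun _ => Finset.sum_nonneg fun _ _ => dist_nonneg) ?_
    (by simpa using Tendsto.const_mul (K : ℝ) hf)
  rw [eventually_inf_principal]
  filter_upwards with I hI
  rw [Finset.mul_sum]
  gcongr with i hi
  exact hK.dist_le_mul _ (hmem _ (hI.1 i hi).1) _ (hmem _ (hI.1 i hi).2)

section Gronwall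

variable {a b : ℝ}

theorem le_mul_exp_integral_of_le_add_integral {c : ℝ} {φ α : ℝ → ℝ} (hab : a ≤ b)
    (hφ : ContinuousOn φ (Icc a b)) (hα : IntervalIntegrable α volume a b) (hα₀ : ∀ s, 0 ≤ α s)
    (h : ∀ t ∈ Icc a b, φ t ≤ c + ∫ s in a..t, α s * φ s) :
    φ b ≤ c * Real.exp (∫ s in a..b, α s) := by
  have hαφ : IntervalIntegrable (fun s => α s * φ s) volume a b :=
    hα.mul_continuousOn (uIcc_of_le hab ▸ hφ)
  let A : ℝ → ℝ := fun t => ∫ s in a..t, α s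
  let G : ℝ → ℝ := fun t => c + ∫ s in a..t, α s * φ s
  -- `α` is only integrable, so `H` is differentiable only almost everywhere; its monotonicity
  -- comes from absolute continuity.
  let H : ℝ → ℝ := fun t => G t * Real.exp (-A t)
  have hA : AbsolutelyContinuousOnInterval A a b :=
    hα.absolutelyContinuousOnInterval_intervalIntegral left_mem_uIcc
  have hG : AbsolutelyContinuousOnInterval G a b :=
    (LipschitzWith.const c).lipschitzOnWith.absolutelyContinuousOnInterval.fun_add
      (hαφ.absolutelyContinuousOnInterval_intervalIntegral left_mem_uIcc)
  have hH : AbsolutelyContinuousOnInterval H a b :=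
    hG.fun_mul (absolutelyContinuousOnInterval_contDiff_comp
      (g := fun y => Real.exp (-y)) (by fun_prop) hA)
  have hH' : ∀ᵐ t, t ∈ Ioc a b → deriv H t ≤ 0 := by
    filter_upwards [hα.ae_hasDerivAt_integral, hαφ.ae_hasDerivAt_integral] with t hαt hαφt ht
    have htI : t ∈ uIcc a b := uIcc_of_le hab ▸ Ioc_subset_Icc_self ht
    have hderiv : HasDerivAt H
        (α t * φ t * Real.exp (-A t) + G t * (Real.exp (-A t) * -α t)) t :=
      ((hαφt htI a left_mem_uIcc).const_add c).mul (hαt htI a left_mem_uIcc).neg.exp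
    rw [hderiv.deriv]
    have hle : α t * Real.exp (-A t) * φ t ≤ α t * Real.exp (-A t) * G t :=
      mul_le_mul_of_nonneg_left (h t (Ioc_subset_Icc_self ht))
        (mul_nonneg (hα₀ t) (Real.exp_nonneg _))
    linarith
  have hHb : H b ≤ H a := by
    rw [← sub_nonpos, ← hH.integral_deriv_eq_sub, intervalIntegral.integral_of_le hab]
    exact setIntegral_nonpos_of_ae_restrict ((ae_restrict_iff' measurableSet_Ioc).2 hH')
  calc φ b ≤ G b := h b (right_mem_Icc.2 hab)
    _ = H b * Real.exp (A b) := by simp [H, mul_assoc, ← Real.exp_add]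
    _ ≤ H a * Real.exp (A b) := by gcongr
    _ = c * Real.exp (∫ s in a..b, α s) := by simp [H, G, A]

theorem norm_le_mul_exp_integral_of_norm_sub_integral_le {E : Type*} [NormedAddCommGroup E]
    [NormedSpace ℝ E] {ρ : ℝ} {δ k : ℝ → E} {α β : ℝ → ℝ} (hδ : ContinuousOn δ (Icc a b))
    (hα : IntervalIntegrable α volume a b) (hα₀ : ∀ s, 0 ≤ α s)
    (hβ : IntervalIntegrable β volume a b) (hβ₀ : ∀ s, 0 ≤ β s)
    (hk : ∀ᵐ s, s ∈ Icc a b → ‖k s‖ ≤ α s * ‖δ s‖ + β s)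
    (hρ : ∀ t ∈ Icc a b, ‖δ t - ∫ s in a..t, k s‖ ≤ ρ) {t : ℝ} (ht : t ∈ Icc a b) :
    ‖δ t‖ ≤ (ρ + ∫ s in a..b, β s) * Real.exp (∫ s in a..b, α s) := by
  have hab : a ≤ b := ht.1.trans ht.2
  have hρ₀ : 0 ≤ ρ := (norm_nonneg _).trans (hρ t ht)
  have hβ_int : 0 ≤ ∫ s in a..b, β s := intervalIntegral.integral_nonneg hab fun s _ => hβ₀ s
  have hsub : ∀ {r}, r ∈ Icc a b → uIcc a r ⊆ uIcc a b := fun hr =>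
    uIcc_subset_uIcc_left (uIcc_of_le hab ▸ hr)
  have hδ_le : ∀ r ∈ Icc a b, ‖δ r‖ ≤ (ρ + ∫ s in a..b, β s) + ∫ s in a..r, α s * ‖δ s‖ := by
    intro r hr
    have hαδ : IntervalIntegrable (fun s => α s * ‖δ s‖) volume a r :=
      (hα.mul_continuousOn (uIcc_of_le hab ▸ hδ.norm)).mono_set (hsub hr)
    have hk_int : ‖∫ s in a..r, k s‖ ≤ ∫ s in a..r, (α s * ‖δ s‖ + β s) :=
      intervalIntegral.norm_integral_le_of_norm_le hr.1
        (hk.mono fun s hs hsr => hs ⟨hsr.1.le, hsr.2.trans hr.2⟩)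
        (hαδ.add (hβ.mono_set (hsub hr)))
    rw [intervalIntegral.integral_add hαδ (hβ.mono_set (hsub hr))] at hk_int
    have hβ_mono : ∫ s in a..r, β s ≤ ∫ s in a..b, β s :=
      intervalIntegral.integral_mono_interval le_rfl hr.1 hr.2 (.of_forall hβ₀) hβ
    linarith [hρ r hr, norm_le_norm_sub_add (δ r) (∫ s in a..r, k s)]
  calc ‖δ t‖ ≤ (ρ + ∫ s in a..b, β s) * Real.exp (∫ s in a..t, α s) :=
        le_mul_exp_integral_of_le_add_integral ht.1
          (hδ.norm.mono (Icc_subset_Icc_right ht.2)) (hα.mono_set (hsub ht)) hα₀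
          fun r hr => hδ_le r ⟨hr.1, hr.2.trans ht.2⟩
    _ ≤ (ρ + ∫ s in a..b, β s) * Real.exp (∫ s in a..b, α s) := by
        gcongr
        exact intervalIntegral.integral_mono_interval le_rfl ht.1 ht.2 (.of_forall hα₀) hα

end Gronwall

/-! ### Second differences -/

section SecondDifference

variable {E G H : Type*} [NormedAddCommGroup E] [NormedSpace ℝ E] [NormedAddCommGroup G]
  [NormedSpace ℝ G] [NormedAddCommGroup H] [NormedSpace ℝ H]

/-- `f` is of class `C^{1,1}` on the whole space, with `K` a Lipschitz constant of both `f` and its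
derivative. This is the regularity under which second differences of `f` are quadratically small. -/
structure IsC11With (K : ℝ≥0) (f : E → G) : Prop where
  differentiable : Differentiable ℝ f
  lipschitzWith : LipschitzWith K f
  lipschitzWith_fderiv : LipschitzWith K (fderiv ℝ f)

theorem exists_isC11With {f : E → G} (hf : ContDiff ℝ 2 f) (h₁ : ∃ C, ∀ y, ‖fderiv ℝ f y‖ ≤ C)
    (h₂ : ∃ C, ∀ y, ‖fderiv ℝ (fderiv ℝ f) y‖ ≤ C) : ∃ K, IsC11With K f := by
  obtain ⟨C₁, hC₁⟩ := h₁
  obtain ⟨C₂, hC₂⟩ := h₂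
  have hdiff : Differentiable ℝ f := hf.differentiable two_ne_zero
  have hdiff' : Differentiable ℝ (fderiv ℝ f) :=
    (hf.fderiv_right (m := 1) le_rfl).differentiable one_ne_zero
  refine ⟨max C₁.toNNReal C₂.toNNReal, hdiff, ?_, ?_⟩
  · refine (lipschitzWith_of_nnnorm_fderiv_le hdiff fun y => ?_).weaken (le_max_left _ _)
    exact NNReal.le_toNNReal_of_coe_le (hC₁ y)
  · refine (lipschitzWith_of_nnnorm_fderiv_le hdiff' fun y => ?_).weaken (le_max_right _ _)
    exact NNReal.le_toNNReal_of_coe_le (hC₂ y)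

namespace IsC11With

variable {K L : ℝ≥0} {f g : E → G}

theorem mono (hf : IsC11With K f) (hKL : K ≤ L) : IsC11With L f :=
  ⟨hf.differentiable, hf.lipschitzWith.weaken hKL, hf.lipschitzWith_fderiv.weaken hKL⟩

theorem add (hf : IsC11With K f) (hg : IsC11With L g) :
    IsC11With (K + L) fun y => f y + g y where
  differentiable := hf.differentiable.add hg.differentiable
  lipschitzWith := hf.lipschitzWith.add hg.lipschitzWith
  lipschitzWith_fderiv := by
    have hfderiv : fderiv ℝ (fun y => f y + g y) = fun y => fderiv ℝ f y + fderiv ℝ g y :=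
      funext fun y => fderiv_fun_add (hf.differentiable y) (hg.differentiable y)
    exact hfderiv ▸ hf.lipschitzWith_fderiv.add hg.lipschitzWith_fderiv

theorem sum {ι : Type*} {s : Finset ι} {K : ι → ℝ≥0} {f : ι → E → G}
    (hf : ∀ i ∈ s, IsC11With (K i) (f i)) : IsC11With (∑ i ∈ s, K i) fun y => ∑ i ∈ s, f i y := by
  classical
  induction s using Finset.induction_on with
  | empty => exact ⟨by simp, by simp, by simp⟩
  | insert i s hi ih =>
    simp only [Finset.sum_insert hi]
    exact (hf i (Finset.mem_insert_self i s)).add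
      (ih fun j hj => hf j (Finset.mem_insert_of_mem hj))

theorem clm_comp (hf : IsC11With K f) (Λ : G →L[ℝ] H) : IsC11With (‖Λ‖₊ * K) fun y => Λ (f y) where
  differentiable := Λ.differentiable.comp hf.differentiable
  lipschitzWith := Λ.lipschitz.comp hf.lipschitzWith
  lipschitzWith_fderiv := by
    have hfderiv : fderiv ℝ (fun y => Λ (f y)) = fun y => Λ.comp (fderiv ℝ f y) :=
      funext fun y => (Λ.hasFDerivAt.comp y (hf.differentiable y).hasFDerivAt).fderiv
    refine hfderiv ▸ LipschitzWith.of_dist_le_mul fun y z => ?_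
    calc dist (Λ.comp (fderiv ℝ f y)) (Λ.comp (fderiv ℝ f z))
        = ‖Λ.comp (fderiv ℝ f y - fderiv ℝ f z)‖ := by
          rw [dist_eq_norm, ContinuousLinearMap.comp_sub]
      _ ≤ ‖Λ‖ * ‖fderiv ℝ f y - fderiv ℝ f z‖ := Λ.opNorm_comp_le _
      _ ≤ ‖Λ‖ * (K * dist y z) := by
          gcongr
          exact hf.lipschitzWith_fderiv.norm_sub_le_of_le (dist_eq_norm y z).ge
      _ = ↑(‖Λ‖₊ * K) * dist y z := by simp [mul_assoc]

theorem norm_second_difference_le (hf : IsC11With K f) (y₀ y₁ y₂ : E) :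
    ‖f y₂ - (2 : ℝ) • f y₁ + f y₀‖ ≤ K * (‖y₂ - (2 : ℝ) • y₁ + y₀‖ + ‖y₁ - y₀‖ ^ 2) := by
  let e : E := y₁ - y₀
  let Δ : E → G := fun z => f (z + e) - f z
  have hΔ : ∀ z, HasFDerivAt Δ (fderiv ℝ f (z + e) - fderiv ℝ f z) z := fun z =>
    ((hasFDerivAt_comp_add_right e).2 (hf.differentiable (z + e)).hasFDerivAt).sub
      (hf.differentiable z).hasFDerivAt
  have hΔ_le : ‖Δ y₁ - Δ y₀‖ ≤ K * ‖e‖ * ‖e‖ :=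
    convex_univ.norm_image_sub_le_of_norm_hasFDerivWithin_le (fun z _ => (hΔ z).hasFDerivWithinAt)
      (fun z _ => by simpa using hf.lipschitzWith_fderiv.norm_sub_le (z + e) z)
      (mem_univ y₀) (mem_univ y₁)
  have hf_le : ‖f y₂ - f (y₁ + e)‖ ≤ K * ‖y₂ - (y₁ + e)‖ := hf.lipschitzWith.norm_sub_le _ _
  have hsplit : f y₂ - (2 : ℝ) • f y₁ + f y₀ = (f y₂ - f (y₁ + e)) + (Δ y₁ - Δ y₀) := by
    simp only [Δ, e, add_sub_cancel]
    module
  have hy : y₂ - (y₁ + e) = y₂ - (2 : ℝ) • y₁ + y₀ := by simp only [e]; module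
  rw [hy] at hf_le
  rw [hsplit]
  linarith [norm_add_le (f y₂ - f (y₁ + e)) (Δ y₁ - Δ y₀)]

end IsC11With

end SecondDifference

section DifferenceQuotient

variable {E V : Type*} [NormedAddCommGroup E] [NormedSpace ℝ E] [NormedAddCommGroup V]
  [NormedSpace ℝ V]

theorem norm_slope_sub_deriv_le_of_second_difference {g : ℝ → E} {g' : E} {C t : ℝ}
    (hg : HasDerivAt g g' 0) (ht : 0 < t)
    (h : ∀ s ∈ Ioc 0 t, ‖g (2 * s) - (2 : ℝ) • g s + g 0‖ ≤ C * s ^ 2) :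
    ‖slope g 0 t - g'‖ ≤ C * t / 2 := by
  let τ : ℕ → ℝ := fun m => t / 2 ^ m
  have hτ : Tendsto τ atTop (𝓝[≠] 0) := by
    refine tendsto_nhdsWithin_iff.2 ⟨?_, .of_forall fun m => (by positivity : τ m ≠ 0)⟩
    exact tendsto_const_nhds.div_atTop (tendsto_pow_atTop_atTop_of_one_lt one_lt_two)
  have hstep : ∀ m, dist (slope g 0 (τ m)) (slope g 0 (τ (m + 1))) ≤ C * t / 2 / 2 / 2 ^ m := by
    intro m
    have hs₀ : 0 < τ (m + 1) := by positivity
    have hs : τ (m + 1) ≤ t := div_le_self ht.le (one_le_pow₀ one_le_two)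
    have hdouble : τ m = 2 * τ (m + 1) := by simp only [τ, pow_succ]; field_simp
    have hslope : slope g 0 (τ m) - slope g 0 (τ (m + 1)) = (2 * τ (m + 1))⁻¹ •
        (g (2 * τ (m + 1)) - (2 : ℝ) • g (τ (m + 1)) + g 0) := by
      simp only [slope_def_module, hdouble, sub_zero]
      match_scalars <;> field_simp
      ring
    rw [dist_eq_norm, hslope, norm_smul, norm_inv, Real.norm_of_nonneg (by positivity)]
    calc (2 * τ (m + 1))⁻¹ * ‖g (2 * τ (m + 1)) - (2 : ℝ) • g (τ (m + 1)) + g 0‖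
        ≤ (2 * τ (m + 1))⁻¹ * (C * τ (m + 1) ^ 2) := by gcongr; exact h _ ⟨hs₀, hs⟩
      _ = C * t / 2 / 2 / 2 ^ m := by simp only [τ]; field_simp; ring
  rw [← dist_eq_norm]
  simpa [τ] using dist_le_of_le_geometric_two_of_tendsto₀ hstep
    (hg.tendsto_slope.comp hτ)

theorem tendsto_fderiv_apply_of_second_difference {ι : Type*} {l : Filter ι} {F : V → E}
    {D : V → V →L[ℝ] E} {u : ι → V} {u₀ v : V} {C : ℝ} (hD : ∀ w, HasFDerivAt F (D w) w)
    (hF₂ : ∀ k, ∀ t ∈ Ioc (0 : ℝ) 1,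
      ‖F (u k + (2 * t) • v) - (2 : ℝ) • F (u k + t • v) + F (u k)‖ ≤ C * t ^ 2)
    (hF : ∀ t : ℝ, Tendsto (fun k => F (u k + t • v)) l (𝓝 (F (u₀ + t • v)))) :
    Tendsto (fun k => D (u k) v) l (𝓝 (D u₀ v)) := by
  let q : V → ℝ → E := fun w => slope (fun t : ℝ => F (w + t • v)) 0
  have hline : ∀ w, HasDerivAt (fun t : ℝ => F (w + t • v)) (D w v) 0 := fun w =>
    (hD w).hasLineDerivAt v
  have hq_unif : TendstoUniformly (fun t k => q (u k) t) (fun k => D (u k) v) (𝓝[>] 0) := by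
    refine Metric.tendstoUniformly_iff.2 fun ε hε => ?_
    have hCt : Tendsto (fun t : ℝ => C * t / 2) (𝓝[>] 0) (𝓝 0) :=
      tendsto_nhdsWithin_of_tendsto_nhds (Continuous.tendsto' (by fun_prop) _ _ (by simp))
    filter_upwards [hCt.eventually_lt_const hε, Ioc_mem_nhdsGT one_pos] with t htε ht k
    rw [dist_comm, dist_eq_norm]
    refine (norm_slope_sub_deriv_le_of_second_difference (hline (u k)) ht.1 fun s hs => ?_).trans_lt
      htε
    simpa using hF₂ k s ⟨hs.1, hs.2.trans ht.2⟩
  have hq_k : ∀ t, Tendsto (fun k => q (u k) t) l (𝓝 (q u₀ t)) := fun t => by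
    simpa [q, slope_def_module] using ((hF t).sub (hF 0)).const_smul t⁻¹
  have hq_t : Tendsto (q u₀) (𝓝[>] 0) (𝓝 (D u₀ v)) :=
    (hline u₀).tendsto_slope.mono_left (nhdsWithin_mono _ fun _ ht => ne_of_gt ht)
  exact hq_unif.tendsto_of_eventually_tendsto (.of_forall hq_k) hq_t

end DifferenceQuotient

/-! ### Weak convergence of controls -/

section WeakConvergence

variable {E V : Type*} [NormedAddCommGroup E] [NormedSpace ℝ E] [NormedAddCommGroup V]
  [NormedSpace ℝ V] {u : ℕ → V} {u₀ : V}

theorem exists_norm_le_of_weak_tendsto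
    (hu : ∀ φ : V →L[ℝ] ℝ, Tendsto (fun k => φ (u k)) atTop (𝓝 (φ u₀))) : ∃ R, ∀ k, ‖u k‖ ≤ R := by
  obtain ⟨R, hR⟩ := banach_steinhaus (g := fun k => NormedSpace.inclusionInDoubleDual ℝ V (u k))
    fun φ => by
      obtain ⟨C, hC⟩ := (hu φ).norm.bddAbove_range
      exact ⟨C, fun k => hC ⟨k, rfl⟩⟩
  refine ⟨R, fun k => ?_⟩
  rw [← (NormedSpace.inclusionInDoubleDualLi ℝ (E := V)).norm_map (u k)]
  exact hR k

variable [FiniteDimensional ℝ E]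

theorem tendsto_clm_apply_of_weak_tendsto
    (hu : ∀ φ : V →L[ℝ] ℝ, Tendsto (fun k => φ (u k)) atTop (𝓝 (φ u₀))) (Λ : V →L[ℝ] E) :
    Tendsto (fun k => Λ (u k)) atTop (𝓝 (Λ u₀)) := by
  let e : E ≃L[ℝ] (Fin (Module.finrank ℝ E) → ℝ) := (Module.finBasis ℝ E).equivFunL
  rw [e.toHomeomorph.isInducing.tendsto_nhds_iff, tendsto_pi_nhds]
  intro i
  let coord : E →L[ℝ] ℝ := (ContinuousLinearMap.proj i).comp e.toContinuousLinearMap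
  exact hu (coord.comp Λ)

theorem tendstoUniformlyOn_clm_apply_of_weak_tendsto {X : Type*} [TopologicalSpace X] {S : Set X}
    (hS : IsCompact S)
    (hu : ∀ φ : V →L[ℝ] ℝ, Tendsto (fun k => φ (u k)) atTop (𝓝 (φ u₀))) {Λ : X → V →L[ℝ] E}
    (hΛ : ContinuousOn Λ S) :
    TendstoUniformlyOn (fun k t => Λ t (u k)) (fun t => Λ t u₀) atTop S := by
  obtain ⟨R, hR⟩ := exists_norm_le_of_weak_tendsto hu
  have hR' : ∀ k, ‖u k - u₀‖ ≤ R + ‖u₀‖ := fun k => norm_sub_le_of_le (hR k) le_rfl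
  rw [← tendstoLocallyUniformlyOn_iff_tendstoUniformlyOn_of_compact hS,
    Metric.tendstoLocallyUniformlyOn_iff]
  intro ε hε s hs
  have hnear : Tendsto (fun t => ‖Λ t - Λ s‖ * (R + ‖u₀‖)) (𝓝[S] s) (𝓝 0) := by
    simpa using (tendsto_iff_norm_sub_tendsto_zero.1 (hΛ s hs)).mul_const (R + ‖u₀‖)
  have hpt : Tendsto (fun k => ‖Λ s (u k - u₀)‖) atTop (𝓝 0) := by
    simpa using tendsto_iff_norm_sub_tendsto_zero.1 (tendsto_clm_apply_of_weak_tendsto hu (Λ s))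
  refine ⟨_, hnear.eventually_lt_const (half_pos hε), ?_⟩
  filter_upwards [hpt.eventually_lt_const (half_pos hε)] with k hk t ht
  rw [dist_comm, dist_eq_norm, ← map_sub]
  calc ‖Λ t (u k - u₀)‖ = ‖(Λ t - Λ s) (u k - u₀) + Λ s (u k - u₀)‖ := by simp
    _ ≤ ‖Λ t - Λ s‖ * ‖u k - u₀‖ + ‖Λ s (u k - u₀)‖ :=
        norm_add_le_of_le ((Λ t - Λ s).le_opNorm _) le_rfl
    _ ≤ ‖Λ t - Λ s‖ * (R + ‖u₀‖) + ‖Λ s (u k - u₀)‖ := by gcongr; exact hR' k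
    _ < ε / 2 + ε / 2 := add_lt_add ht hk
    _ = ε := add_halves ε

end WeakConvergence

theorem intervalIntegrable_of_integrableOn_Icc {E : Type*} [NormedAddCommGroup E] {f : ℝ → E}
    {a b s t : ℝ} (hf : IntegrableOn f (Icc a b)) (hs : s ∈ Icc a b) (ht : t ∈ Icc a b) :
    IntervalIntegrable f volume s t :=
  (hf.mono_set (ordConnected_Icc.uIcc_subset hs ht)).intervalIntegrable

theorem integrableOn_clm_apply {U E : Type*} [NormedAddCommGroup U] [NormedSpace ℝ U]
    [NormedAddCommGroup E] [NormedSpace ℝ E] {A : ℝ → U →L[ℝ] E} {w : ℝ → U} {S : Set ℝ}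
    (hA : ContinuousOn A S) (hS : IsCompact S) (hw : IntegrableOn w S) :
    IntegrableOn (fun s => A s (w s)) S := by
  obtain ⟨C, hC⟩ := hS.exists_bound_of_continuousOn hA
  exact (ContinuousLinearMap.id ℝ (U →L[ℝ] E)).integrable_of_bilin_of_bdd_left C
    (hA.aestronglyMeasurable_of_isCompact hS hS.measurableSet)
    ((ae_restrict_iff' hS.measurableSet).2 (.of_forall hC)) hw

theorem intervalIntegral_congr_of_ae_eq {U E : Type*} [NormedAddCommGroup E] [NormedSpace ℝ E]
    {f g : ℝ → U} (B : ℝ → U → E) {t T : ℝ} (ht : t ∈ Icc 0 T)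
    (hfg : f =ᵐ[volume.restrict (Icc 0 T)] g) :
    ∫ s in (0 : ℝ)..t, B s (f s) = ∫ s in (0 : ℝ)..t, B s (g s) := by
  refine intervalIntegral.integral_congr_ae_restrict ?_
  rw [uIoc_of_le ht.1]
  filter_upwards [ae_restrict_of_ae_restrict_of_subset
    (Ioc_subset_Icc_self.trans (Icc_subset_Icc_right ht.2)) hfg] with s hs
  rw [hs]

theorem toReal_inv_le_one {p : ℝ≥0∞} (hp : 1 ≤ p) : p⁻¹.toReal ≤ 1 :=
  ENNReal.toReal_mono ENNReal.one_ne_top (ENNReal.inv_le_one.2 hp)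

theorem setIntegral_norm_le_norm_mul_rpow {α U : Type*} {mα : MeasurableSpace α} {μ : Measure α}
    [IsFiniteMeasure μ] [NormedAddCommGroup U] {p : ℝ≥0∞} [Fact (1 ≤ p)] (w : Lp U p μ)
    (S : Set α) : ∫ x in S, ‖w x‖ ∂μ ≤ ‖w‖ * μ.real S ^ (1 - p⁻¹.toReal) := by
  have hw : AEStronglyMeasurable w (μ.restrict S) := (Lp.aestronglyMeasurable w).restrict
  have h_le : eLpNorm w 1 (μ.restrict S) ≤ eLpNorm w p μ * μ S ^ (1 - p⁻¹.toReal) := by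
    calc eLpNorm w 1 (μ.restrict S)
        ≤ eLpNorm w p (μ.restrict S) * μ.restrict S univ ^ (1 / (1 : ℝ≥0∞).toReal - 1 / p.toReal) :=
          eLpNorm_le_eLpNorm_mul_rpow_measure_univ Fact.out hw
      _ = eLpNorm w p (μ.restrict S) * μ S ^ (1 - p⁻¹.toReal) := by simp
      _ ≤ eLpNorm w p μ * μ S ^ (1 - p⁻¹.toReal) := by
          gcongr
          exact Measure.restrict_le_self
  rw [integral_norm_eq_lintegral_enorm hw, ← eLpNorm_one_eq_lintegral_enorm, Lp.norm_def,
    Measure.real, ENNReal.toReal_rpow, ← ENNReal.toReal_mul]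
  exact ENNReal.toReal_mono (ENNReal.mul_ne_top (Lp.eLpNorm_ne_top w)
    (ENNReal.rpow_ne_top_of_nonneg (sub_nonneg.2 (toReal_inv_le_one Fact.out))
      (measure_ne_top μ S))) h_le

/-- Controls on `[0, T]` of class `L^p`, with values in the input space `U`. -/
abbrev Controls (U : Type*) [NormedAddCommGroup U] (p : ℝ≥0∞) (T : ℝ) : Type _ :=
  Lp U p (volume.restrict (Icc (0 : ℝ) T))

namespace Controls

variable {U E : Type*} [NormedAddCommGroup U] {p : ℝ≥0∞} [Fact (1 ≤ p)] {T : ℝ}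

theorem integrableOn (w : Controls U p T) : IntegrableOn w (Icc 0 T) :=
  (Lp.memLp w).integrable Fact.out

theorem intervalIntegral_norm_le (w : Controls U p T) {s t : ℝ} (hs : 0 ≤ s) (hst : s ≤ t)
    (ht : t ≤ T) : ∫ r in s..t, ‖w r‖ ≤ ‖w‖ * (t - s) ^ (1 - p⁻¹.toReal) := by
  have hsub : Ioc s t ⊆ Icc 0 T := fun r hr => ⟨hs.trans hr.1.le, hr.2.trans ht⟩
  have h := setIntegral_norm_le_norm_mul_rpow w (Ioc s t)
  rwa [Measure.restrict_restrict_of_subset hsub, measureReal_restrict_apply measurableSet_Ioc,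
    inter_eq_left.2 hsub, Real.volume_real_Ioc_of_le hst,
    ← intervalIntegral.integral_of_le hst] at h

theorem intervalIntegral_norm_le_of_norm_le (hT : 0 ≤ T) {w : Controls U p T} {R : ℝ}
    (hw : ‖w‖ ≤ R) : ∫ r in (0 : ℝ)..T, ‖w r‖ ≤ R * T ^ (1 - p⁻¹.toReal) := by
  refine (w.intervalIntegral_norm_le le_rfl hT le_rfl).trans ?_
  rw [sub_zero]
  gcongr

variable [NormedSpace ℝ U] [NormedAddCommGroup E] [NormedSpace ℝ E] {A : ℝ → U →L[ℝ] E}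

theorem norm_intervalIntegral_clm_apply_le {C : ℝ} (hC : ∀ r ∈ Icc 0 T, ‖A r‖ ≤ C)
    (w : Controls U p T) {s t : ℝ} (hs : s ∈ Icc 0 T) (ht : t ∈ Icc 0 T) :
    ‖∫ r in s..t, A r (w r)‖ ≤ C * (‖w‖ * |t - s| ^ (1 - p⁻¹.toReal)) := by
  wlog hst : s ≤ t generalizing s t
  · rw [intervalIntegral.integral_symm, norm_neg, abs_sub_comm]
    exact this ht hs (le_of_not_ge hst)
  have hC₀ : 0 ≤ C := (norm_nonneg _).trans (hC s hs)
  calc ‖∫ r in s..t, A r (w r)‖ ≤ ∫ r in s..t, C * ‖w r‖ :=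
        intervalIntegral.norm_integral_le_of_norm_le hst
          (.of_forall fun r hr => (A r).le_of_opNorm_le
            (hC r ⟨hs.1.trans hr.1.le, hr.2.trans ht.2⟩) (w r))
          ((intervalIntegrable_of_integrableOn_Icc w.integrableOn hs ht).norm.const_mul C)
    _ = C * ∫ r in s..t, ‖w r‖ := intervalIntegral.integral_const_mul _ _
    _ ≤ C * (‖w‖ * |t - s| ^ (1 - p⁻¹.toReal)) := by
        rw [abs_of_nonneg (sub_nonneg.2 hst)]
        gcongr
        exact w.intervalIntegral_norm_le hs.1 hst ht.2

theorem exists_clm_eq_intervalIntegral (hA : ContinuousOn A (Icc 0 T)) {t : ℝ}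
    (ht : t ∈ Icc 0 T) :
    ∃ Λ : Controls U p T →L[ℝ] E, ∀ w, Λ w = ∫ s in (0 : ℝ)..t, A s (w s) := by
  have h₀ : (0 : ℝ) ∈ Icc 0 T := left_mem_Icc.2 (ht.1.trans ht.2)
  have hint : ∀ w : Controls U p T, IntervalIntegrable (fun s => A s (w s)) volume 0 t := fun w =>
    intervalIntegrable_of_integrableOn_Icc
      (integrableOn_clm_apply hA isCompact_Icc w.integrableOn) h₀ ht
  obtain ⟨C, hC⟩ := isCompact_Icc.exists_bound_of_continuousOn hA
  refine ⟨LinearMap.mkContinuous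
    { toFun := fun w => ∫ s in (0 : ℝ)..t, A s (w s)
      map_add' := fun w w' => ?_
      map_smul' := fun c w => ?_ } (C * |t - 0| ^ (1 - p⁻¹.toReal)) fun w => ?_, fun w => rfl⟩
  · rw [intervalIntegral_congr_of_ae_eq (fun s => A s) ht (Lp.coeFn_add w w'),
      ← intervalIntegral.integral_add (hint w) (hint w')]
    simp only [Pi.add_apply, map_add]
  · rw [intervalIntegral_congr_of_ae_eq (fun s => A s) ht (Lp.coeFn_smul c w), RingHom.id_apply,
      ← intervalIntegral.integral_smul]
    simp only [Pi.smul_apply, map_smul]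
  · exact (norm_intervalIntegral_clm_apply_le hC w h₀ ht).trans_eq (by ring)

theorem exists_continuousOn_clm_eq_intervalIntegral (hp : 1 < p) (hA : ContinuousOn A (Icc 0 T)) :
    ∃ Λ : ℝ → Controls U p T →L[ℝ] E, ContinuousOn Λ (Icc 0 T) ∧
      ∀ t ∈ Icc 0 T, ∀ w, Λ t w = ∫ s in (0 : ℝ)..t, A s (w s) := by
  obtain ⟨C, hC⟩ := isCompact_Icc.exists_bound_of_continuousOn hA
  choose! Λ hΛ using fun t (ht : t ∈ Icc 0 T) => exists_clm_eq_intervalIntegral (p := p) hA ht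
  refine ⟨Λ, fun s hs => ?_, hΛ⟩
  have hθ : 0 < 1 - p⁻¹.toReal := sub_pos.2 <|
    (ENNReal.toReal_lt_toReal (by simpa using (zero_lt_one.trans hp).ne') ENNReal.one_ne_top).2
      (ENNReal.inv_lt_one.2 hp)
  have hΛ_sub : ∀ t ∈ Icc 0 T, ‖Λ t - Λ s‖ ≤ C * |t - s| ^ (1 - p⁻¹.toReal) := by
    intro t ht
    have hC₀ : 0 ≤ C := (norm_nonneg _).trans (hC s hs)
    refine ContinuousLinearMap.opNorm_le_bound _ (by positivity) fun w => ?_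
    have hint : ∀ r ∈ Icc 0 T, IntervalIntegrable (fun z => A z (w z)) volume 0 r := fun r hr =>
      intervalIntegrable_of_integrableOn_Icc
        (integrableOn_clm_apply hA isCompact_Icc w.integrableOn)
        (left_mem_Icc.2 (hr.1.trans hr.2)) hr
    rw [sub_apply, hΛ t ht, hΛ s hs,
      intervalIntegral.integral_interval_sub_left (hint t ht) (hint s hs)]
    exact (norm_intervalIntegral_clm_apply_le hC w hs ht).trans_eq (by ring)
  have hbound : Tendsto (fun t => C * |t - s| ^ (1 - p⁻¹.toReal)) (𝓝 s) (𝓝 0) := by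
    refine Continuous.tendsto' ?_ _ _ (by rw [sub_self, abs_zero, Real.zero_rpow hθ.ne', mul_zero])
    exact continuous_const.mul ((continuous_sub_right s).abs.rpow_const fun _ => .inr hθ.le)
  exact tendsto_iff_norm_sub_tendsto_zero.2 (squeeze_zero' (.of_forall fun _ => norm_nonneg _)
    (eventually_nhdsWithin_of_forall hΛ_sub) (tendsto_nhdsWithin_of_tendsto_nhds hbound))

theorem tendstoUniformlyOn_intervalIntegral_clm_apply [FiniteDimensional ℝ E] (hp : 1 < p)
    (hA : ContinuousOn A (Icc 0 T)) {u : ℕ → Controls U p T} {u₀ : Controls U p T}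
    (hu : ∀ φ : Controls U p T →L[ℝ] ℝ, Tendsto (fun k => φ (u k)) atTop (𝓝 (φ u₀))) :
    TendstoUniformlyOn (fun k t => ∫ s in (0 : ℝ)..t, A s (u k s))
      (fun t => ∫ s in (0 : ℝ)..t, A s (u₀ s)) atTop (Icc 0 T) := by
  obtain ⟨Λ, hΛ_cont, hΛ⟩ := exists_continuousOn_clm_eq_intervalIntegral (p := p) hp hA
  exact ((tendstoUniformlyOn_clm_apply_of_weak_tendsto isCompact_Icc hu hΛ_cont).congr
    (.of_forall fun k t ht => hΛ t ht (u k))).congr_right fun t ht => hΛ t ht u₀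

end Controls

/-! ### Control-affine systems -/

section AffineBound

variable {U : Type*} [NormedAddCommGroup U] {u : ℝ → U} {T m : ℝ}

theorem intervalIntegrable_add_mul_norm (hT : 0 ≤ T) (hu : IntegrableOn u (Icc 0 T)) (a b : ℝ) :
    IntervalIntegrable (fun s => a + b * ‖u s‖) volume 0 T :=
  intervalIntegrable_const.add ((intervalIntegrable_of_integrableOn_Icc hu
    (left_mem_Icc.2 hT) (right_mem_Icc.2 hT)).norm.const_mul b)

theorem intervalIntegral_add_mul_norm_le (hT : 0 ≤ T) (hu : IntegrableOn u (Icc 0 T))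
    (hm : ∫ s in (0 : ℝ)..T, ‖u s‖ ≤ m) {a b : ℝ} (hb : 0 ≤ b) :
    ∫ s in (0 : ℝ)..T, (a + b * ‖u s‖) ≤ a * T + b * m := by
  have hu' : IntervalIntegrable (fun s => b * ‖u s‖) volume 0 T := by
    simpa using intervalIntegrable_add_mul_norm hT hu 0 b
  rw [intervalIntegral.integral_add intervalIntegrable_const hu',
    intervalIntegral.integral_const, intervalIntegral.integral_const_mul, sub_zero, smul_eq_mul,
    mul_comm T]
  gcongr

theorem norm_le_mul_exp_of_norm_sub_integral_le {E : Type*} [NormedAddCommGroup E]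
    [NormedSpace ℝ E] {K L : ℝ≥0} {δ k : ℝ → E} {β : ℝ → ℝ} {ρ : ℝ}
    (hu : IntegrableOn u (Icc 0 T)) (hm : ∫ s in (0 : ℝ)..T, ‖u s‖ ≤ m)
    (hδ : ContinuousOn δ (Icc 0 T)) (hβ : IntervalIntegrable β volume 0 T) (hβ₀ : ∀ s, 0 ≤ β s)
    (hk : ∀ᵐ s, s ∈ Icc 0 T → ‖k s‖ ≤ (K + L * ‖u s‖) * ‖δ s‖ + β s)
    (hρ : ∀ t ∈ Icc 0 T, ‖δ t - ∫ s in (0 : ℝ)..t, k s‖ ≤ ρ) {t : ℝ} (ht : t ∈ Icc 0 T) :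
    ‖δ t‖ ≤ (ρ + ∫ s in (0 : ℝ)..T, β s) * Real.exp (K * T + L * m) := by
  have hT : 0 ≤ T := ht.1.trans ht.2
  have hρ₀ : 0 ≤ ρ := (norm_nonneg _).trans (hρ t ht)
  have hβ_int : 0 ≤ ∫ s in (0 : ℝ)..T, β s :=
    intervalIntegral.integral_nonneg hT fun s _ => hβ₀ s
  refine (norm_le_mul_exp_integral_of_norm_sub_integral_le hδ
    (intervalIntegrable_add_mul_norm hT hu K L) (fun s => by positivity) hβ hβ₀ hk hρ ht).trans ?_
  gcongr
  exact intervalIntegral_add_mul_norm_le hT hu hm L.2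

end AffineBound

section AffineSystem

variable {E U : Type*} [NormedAddCommGroup E] [NormedSpace ℝ E] [NormedAddCommGroup U]
  [NormedSpace ℝ U]

/-- The velocity field `y ↦ f y + B y w` of the control-affine system with drift `f` and input
operator `B` when the input is frozen at the value `w`. -/
def controlField (f : E → E) (B : E → U →L[ℝ] E) (w : U) (y : E) : E :=
  f y + B y w

/-- `γ` is a trajectory on `[0, T]`, started at `x`, of the control-affine system
`γ' = f γ + B γ u`, in integrated (Carathéodory) form. -/
def IsAffineTrajectory (f : E → E) (B : E → U →L[ℝ] E) (x : E) (T : ℝ) (u : ℝ → U)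
    (γ : ℝ → E) : Prop :=
  ContinuousOn γ (Icc 0 T) ∧
    ∀ t ∈ Icc 0 T, γ t = x + ∫ s in (0 : ℝ)..t, controlField f B (u s) (γ s)

variable {f : E → E} {B : E → U →L[ℝ] E} {K L : ℝ≥0} {x : E} {T m : ℝ} {u : ℝ → U} {γ : ℝ → E}

theorem norm_clm_apply_const_le (w : U) : ‖ContinuousLinearMap.apply ℝ E w‖ ≤ ‖w‖ :=
  ContinuousLinearMap.opNorm_le_bound _ (norm_nonneg w) fun A => by
    simpa [mul_comm] using A.le_opNorm w

theorem lipschitzWith_controlField (hf : LipschitzWith K f) (hB : LipschitzWith L B) (w : U) :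
    LipschitzWith (K + ‖w‖₊ * L) (controlField f B w) :=
  hf.add (((ContinuousLinearMap.apply ℝ E w).lipschitzWith_of_opNorm_le
    (norm_clm_apply_const_le w)).comp hB)

theorem isC11With_controlField (hf : IsC11With K f) (hB : IsC11With L B) (w : U) :
    IsC11With (K + ‖w‖₊ * L) (controlField f B w) :=
  hf.add ((hB.clm_comp (ContinuousLinearMap.apply ℝ E w)).mono
    (by gcongr; exact norm_clm_apply_const_le w))

theorem norm_controlField_second_difference_le (hf : IsC11With K f) (hB : IsC11With L B) (w v : U)
    (y₀ y₁ y₂ : E) :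
    ‖controlField f B (w + (2 : ℝ) • v) y₂ - (2 : ℝ) • controlField f B (w + v) y₁ +
        controlField f B w y₀‖ ≤
      (K + L * ‖w‖) * (‖y₂ - (2 : ℝ) • y₁ + y₀‖ + ‖y₁ - y₀‖ ^ 2) +
        2 * L * ‖y₂ - y₁‖ * ‖v‖ := by
  have hsplit : controlField f B (w + (2 : ℝ) • v) y₂ - (2 : ℝ) • controlField f B (w + v) y₁ +
      controlField f B w y₀ =
        (controlField f B w y₂ - (2 : ℝ) • controlField f B w y₁ + controlField f B w y₀) +
          (2 : ℝ) • (B y₂ - B y₁) v := by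
    simp only [controlField, map_add, map_smul, sub_apply]
    module
  have hfrozen := (isC11With_controlField hf hB w).norm_second_difference_le y₀ y₁ y₂
  have hinput : ‖(2 : ℝ) • (B y₂ - B y₁) v‖ ≤ 2 * (L * ‖y₂ - y₁‖ * ‖v‖) := by
    rw [norm_smul, Real.norm_two]
    gcongr
    exact (B y₂ - B y₁).le_of_opNorm_le (hB.lipschitzWith.norm_sub_le y₂ y₁) v
  push_cast at hfrozen
  rw [hsplit]
  exact (norm_add_le_of_le hfrozen hinput).trans_eq (by ring)

namespace IsAffineTrajectory

theorem intervalIntegrable_clm_apply {v : ℝ → U} (hγ : IsAffineTrajectory f B x T u γ)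
    (hB : Continuous B) (hv : IntegrableOn v (Icc 0 T)) {t : ℝ} (ht : t ∈ Icc 0 T) :
    IntervalIntegrable (fun s => B (γ s) (v s)) volume 0 t :=
  intervalIntegrable_of_integrableOn_Icc
    (integrableOn_clm_apply (hB.comp_continuousOn hγ.1) isCompact_Icc hv)
    (left_mem_Icc.2 (ht.1.trans ht.2)) ht

theorem intervalIntegrable_controlField {v : ℝ → U} (hγ : IsAffineTrajectory f B x T u γ)
    (hf : Continuous f) (hB : Continuous B) (hv : IntegrableOn v (Icc 0 T)) {t : ℝ}
    (ht : t ∈ Icc 0 T) :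
    IntervalIntegrable (fun s => controlField f B (v s) (γ s)) volume 0 t :=
  (intervalIntegrable_of_integrableOn_Icc
    ((hf.comp_continuousOn hγ.1).integrableOn_compact isCompact_Icc)
    (left_mem_Icc.2 (ht.1.trans ht.2)) ht).add (hγ.intervalIntegrable_clm_apply hB hv ht)

theorem norm_sub_initial_le (hγ : IsAffineTrajectory f B x T u γ) (hf : LipschitzWith K f)
    (hB : LipschitzWith L B) (hu : IntegrableOn u (Icc 0 T))
    (hm : ∫ s in (0 : ℝ)..T, ‖u s‖ ≤ m) {t : ℝ} (ht : t ∈ Icc 0 T) :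
    ‖γ t - x‖ ≤ (‖f x‖ * T + ‖B x‖ * m) * Real.exp (K * T + L * m) := by
  have hT : 0 ≤ T := ht.1.trans ht.2
  have hk : ∀ s, ‖controlField f B (u s) (γ s)‖ ≤
      (K + L * ‖u s‖) * ‖γ s - x‖ + (‖f x‖ + ‖B x‖ * ‖u s‖) := by
    intro s
    have hlip := (lipschitzWith_controlField hf hB (u s)).norm_sub_le (γ s) x
    have hx : ‖controlField f B (u s) x‖ ≤ ‖f x‖ + ‖B x‖ * ‖u s‖ :=
      norm_add_le_of_le le_rfl ((B x).le_opNorm _)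
    push_cast at hlip
    linarith [norm_le_norm_sub_add (controlField f B (u s) (γ s)) (controlField f B (u s) x)]
  refine (norm_le_mul_exp_of_norm_sub_integral_le (ρ := 0) hu hm (hγ.1.sub continuousOn_const)
    (intervalIntegrable_add_mul_norm hT hu ‖f x‖ ‖B x‖) (fun s => by positivity)
    (.of_forall fun s _ => hk s) (fun r hr => ?_) ht).trans ?_
  · simp [hγ.2 r hr]
  · rw [zero_add]
    gcongr
    exact intervalIntegral_add_mul_norm_le hT hu hm (norm_nonneg _)

-- The controls are compared along `γ₀` only: this keeps `ρ` small for merely weakly close controls.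
theorem norm_sub_le {u₀ u₁ : ℝ → U} {γ₀ γ₁ : ℝ → E} {ρ : ℝ}
    (hγ₀ : IsAffineTrajectory f B x T u₀ γ₀) (hγ₁ : IsAffineTrajectory f B x T u₁ γ₁)
    (hf : LipschitzWith K f) (hB : LipschitzWith L B) (hu₀ : IntegrableOn u₀ (Icc 0 T))
    (hu₁ : IntegrableOn u₁ (Icc 0 T)) (hm : ∫ s in (0 : ℝ)..T, ‖u₁ s‖ ≤ m)
    (hρ : ∀ t ∈ Icc 0 T,
      ‖(∫ s in (0 : ℝ)..t, B (γ₀ s) (u₁ s)) - ∫ s in (0 : ℝ)..t, B (γ₀ s) (u₀ s)‖ ≤ ρ)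
    {t : ℝ} (ht : t ∈ Icc 0 T) :
    ‖γ₁ t - γ₀ t‖ ≤ ρ * Real.exp (K * T + L * m) := by
  have hk : ∀ s, ‖controlField f B (u₁ s) (γ₁ s) - controlField f B (u₁ s) (γ₀ s)‖ ≤
      (K + L * ‖u₁ s‖) * ‖γ₁ s - γ₀ s‖ + 0 := fun s => by
    simpa [mul_comm] using (lipschitzWith_controlField hf hB (u₁ s)).norm_sub_le (γ₁ s) (γ₀ s)
  have hsplit : ∀ r ∈ Icc 0 T, γ₁ r - γ₀ r - ∫ s in (0 : ℝ)..r,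
      (controlField f B (u₁ s) (γ₁ s) - controlField f B (u₁ s) (γ₀ s)) =
        (∫ s in (0 : ℝ)..r, B (γ₀ s) (u₁ s)) - ∫ s in (0 : ℝ)..r, B (γ₀ s) (u₀ s) := by
    intro r hr
    have h₁₁ := hγ₁.intervalIntegrable_controlField hf.continuous hB.continuous hu₁ hr
    have h₁₀ := hγ₀.intervalIntegrable_controlField hf.continuous hB.continuous hu₁ hr
    have h₀₀ := hγ₀.intervalIntegrable_controlField hf.continuous hB.continuous hu₀ hr
    rw [hγ₁.2 r hr, hγ₀.2 r hr, add_sub_add_left_eq_sub, ← intervalIntegral.integral_sub h₁₁ h₀₀,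
      ← intervalIntegral.integral_sub (h₁₁.sub h₀₀) (h₁₁.sub h₁₀),
      ← intervalIntegral.integral_sub (hγ₀.intervalIntegrable_clm_apply hB.continuous hu₁ hr)
        (hγ₀.intervalIntegrable_clm_apply hB.continuous hu₀ hr)]
    congr 1 with s
    simp only [controlField]
    abel
  simpa using norm_le_mul_exp_of_norm_sub_integral_le hu₁ hm (hγ₁.1.sub hγ₀.1)
    intervalIntegrable_const (fun _ => le_rfl) (.of_forall fun s _ => hk s)
    (fun r hr => (hsplit r hr).symm ▸ hρ r hr) ht

theorem second_difference_eq_integral {u₀ u₁ u₂ : ℝ → U} {γ₀ γ₁ γ₂ : ℝ → E}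
    (hγ₀ : IsAffineTrajectory f B x T u₀ γ₀) (hγ₁ : IsAffineTrajectory f B x T u₁ γ₁)
    (hγ₂ : IsAffineTrajectory f B x T u₂ γ₂) (hf : Continuous f) (hB : Continuous B)
    (hu₀ : IntegrableOn u₀ (Icc 0 T)) (hu₁ : IntegrableOn u₁ (Icc 0 T))
    (hu₂ : IntegrableOn u₂ (Icc 0 T)) {t : ℝ} (ht : t ∈ Icc 0 T) :
    γ₂ t - (2 : ℝ) • γ₁ t + γ₀ t = ∫ s in (0 : ℝ)..t, (controlField f B (u₂ s) (γ₂ s) -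
      (2 : ℝ) • controlField f B (u₁ s) (γ₁ s) + controlField f B (u₀ s) (γ₀ s)) := by
  have h₀ := hγ₀.intervalIntegrable_controlField hf hB hu₀ ht
  have h₁ : IntervalIntegrable (fun s => (2 : ℝ) • controlField f B (u₁ s) (γ₁ s)) volume 0 t :=
    (hγ₁.intervalIntegrable_controlField hf hB hu₁ ht).smul 2
  have h₂ := hγ₂.intervalIntegrable_controlField hf hB hu₂ ht
  rw [intervalIntegral.integral_add (h₂.sub h₁) h₀, intervalIntegral.integral_sub h₂ h₁,
    intervalIntegral.integral_smul, hγ₀.2 t ht, hγ₁.2 t ht, hγ₂.2 t ht]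
  module

theorem norm_second_difference_le {u₀ u₁ u₂ v : ℝ → U} {γ₀ γ₁ γ₂ : ℝ → E} {c n : ℝ}
    (hγ₀ : IsAffineTrajectory f B x T u₀ γ₀) (hγ₁ : IsAffineTrajectory f B x T u₁ γ₁)
    (hγ₂ : IsAffineTrajectory f B x T u₂ γ₂) (hf : IsC11With K f) (hB : IsC11With L B)
    (hu₀ : IntegrableOn u₀ (Icc 0 T)) (hu₁ : IntegrableOn u₁ (Icc 0 T))
    (hu₂ : IntegrableOn u₂ (Icc 0 T)) (hv : IntegrableOn v (Icc 0 T))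
    (hu₁_eq : ∀ᵐ s, s ∈ Icc 0 T → u₁ s = u₀ s + v s)
    (hu₂_eq : ∀ᵐ s, s ∈ Icc 0 T → u₂ s = u₀ s + (2 : ℝ) • v s)
    (hm : ∫ s in (0 : ℝ)..T, ‖u₀ s‖ ≤ m) (hn : ∫ s in (0 : ℝ)..T, ‖v s‖ ≤ n)
    (h₀₁ : ∀ s ∈ Icc 0 T, ‖γ₁ s - γ₀ s‖ ≤ c) (h₁₂ : ∀ s ∈ Icc 0 T, ‖γ₂ s - γ₁ s‖ ≤ c)
    {t : ℝ} (ht : t ∈ Icc 0 T) :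
    ‖γ₂ t - (2 : ℝ) • γ₁ t + γ₀ t‖ ≤
      (c ^ 2 * (K * T + L * m) + 2 * L * c * n) * Real.exp (K * T + L * m) := by
  have hT : 0 ≤ T := ht.1.trans ht.2
  have hc : 0 ≤ c := (norm_nonneg _).trans (h₀₁ t ht)
  have hβ₁ : IntervalIntegrable (fun s => c ^ 2 * (K + L * ‖u₀ s‖)) volume 0 T :=
    (intervalIntegrable_add_mul_norm hT hu₀ K L).const_mul _
  have hβ₂ : IntervalIntegrable (fun s => 2 * L * c * ‖v s‖) volume 0 T := by
    simpa using intervalIntegrable_add_mul_norm hT hv 0 (2 * L * c)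
  have hk : ∀ᵐ s, s ∈ Icc 0 T → ‖controlField f B (u₂ s) (γ₂ s) -
      (2 : ℝ) • controlField f B (u₁ s) (γ₁ s) + controlField f B (u₀ s) (γ₀ s)‖ ≤
        (K + L * ‖u₀ s‖) * ‖γ₂ s - (2 : ℝ) • γ₁ s + γ₀ s‖ +
          (c ^ 2 * (K + L * ‖u₀ s‖) + 2 * L * c * ‖v s‖) := by
    filter_upwards [hu₁_eq, hu₂_eq] with s hs₁ hs₂ hs
    rw [hs₁ hs, hs₂ hs]
    calc _ ≤ (K + L * ‖u₀ s‖) * (‖γ₂ s - (2 : ℝ) • γ₁ s + γ₀ s‖ + ‖γ₁ s - γ₀ s‖ ^ 2) +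
          2 * L * ‖γ₂ s - γ₁ s‖ * ‖v s‖ := norm_controlField_second_difference_le hf hB _ _ _ _ _
      _ ≤ (K + L * ‖u₀ s‖) * (‖γ₂ s - (2 : ℝ) • γ₁ s + γ₀ s‖ + c ^ 2) + 2 * L * c * ‖v s‖ := by
          gcongr
          exacts [h₀₁ s hs, h₁₂ s hs]
      _ = _ := by ring
  refine (norm_le_mul_exp_of_norm_sub_integral_le (ρ := 0) hu₀ hm
    ((hγ₂.1.sub (hγ₁.1.const_smul (2 : ℝ))).add hγ₀.1) (hβ₁.add hβ₂) (fun s => by positivity) hk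
    (fun r hr => le_of_eq ?_) ht).trans ?_
  · rw [norm_eq_zero, sub_eq_zero]
    exact hγ₀.second_difference_eq_integral hγ₁ hγ₂ hf.lipschitzWith.continuous
      hB.lipschitzWith.continuous hu₀ hu₁ hu₂ hr
  · rw [zero_add, intervalIntegral.integral_add hβ₁ hβ₂, intervalIntegral.integral_const_mul,
      intervalIntegral.integral_const_mul]
    gcongr
    exact intervalIntegral_add_mul_norm_le hT hu₀ hm L.2

end IsAffineTrajectory
end AffineSystem

/-! ### The endpoint map -/

section Endpoint

variable {E U : Type*} [NormedAddCommGroup E] [NormedSpace ℝ E] [NormedAddCommGroup U]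
  [NormedSpace ℝ U] {f : E → E} {B : E → U →L[ℝ] E} {K L : ℝ≥0} {x : E} {p : ℝ≥0∞}
  [Fact (1 ≤ p)] {T : ℝ}

namespace IsAffineTrajectory

theorem exists_norm_inputOperator_le (hf : LipschitzWith K f) (hB : LipschitzWith L B) (R : ℝ) :
    ∃ M, ∀ (u : Controls U p T) (γ : ℝ → E), ‖u‖ ≤ R → IsAffineTrajectory f B x T u γ →
      ∀ t ∈ Icc 0 T, ‖B (γ t)‖ ≤ M := by
  let m : ℝ := R * T ^ (1 - p⁻¹.toReal)
  refine ⟨‖B x‖ + L * ((‖f x‖ * T + ‖B x‖ * m) * Real.exp (K * T + L * m)),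
    fun u γ hu hγ t ht => ?_⟩
  have hγ_sub := hγ.norm_sub_initial_le hf hB u.integrableOn
    (Controls.intervalIntegral_norm_le_of_norm_le (ht.1.trans ht.2) hu) ht
  calc ‖B (γ t)‖ ≤ ‖B x‖ + ‖B (γ t) - B x‖ := norm_le_norm_add_norm_sub' _ _
    _ ≤ _ := by gcongr; exact hB.norm_sub_le_of_le hγ_sub

theorem exists_norm_sub_le_mul_norm_sub (hf : LipschitzWith K f) (hB : LipschitzWith L B) (R : ℝ) :
    ∃ C, ∀ (u₀ u₁ : Controls U p T) (γ₀ γ₁ : ℝ → E), ‖u₀‖ ≤ R → ‖u₁‖ ≤ R →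
      IsAffineTrajectory f B x T u₀ γ₀ → IsAffineTrajectory f B x T u₁ γ₁ →
      ∀ t ∈ Icc 0 T, ‖γ₁ t - γ₀ t‖ ≤ C * ‖u₁ - u₀‖ := by
  let θ : ℝ := 1 - p⁻¹.toReal
  obtain ⟨M, hM⟩ := exists_norm_inputOperator_le (x := x) (p := p) (T := T) hf hB R
  refine ⟨M * T ^ θ * Real.exp (K * T + L * (R * T ^ θ)),
    fun u₀ u₁ γ₀ γ₁ hu₀ hu₁ hγ₀ hγ₁ t ht => ?_⟩
  have hρ : ∀ r ∈ Icc 0 T, ‖(∫ s in (0 : ℝ)..r, B (γ₀ s) (u₁ s)) -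
      ∫ s in (0 : ℝ)..r, B (γ₀ s) (u₀ s)‖ ≤ M * (‖u₁ - u₀‖ * T ^ θ) := by
    intro r hr
    obtain ⟨Λ, hΛ⟩ := Controls.exists_clm_eq_intervalIntegral (p := p) (A := fun s => B (γ₀ s))
      (hB.continuous.comp_continuousOn hγ₀.1) hr
    have hM₀ : 0 ≤ M := (norm_nonneg _).trans (hM u₀ γ₀ hu₀ hγ₀ r hr)
    rw [← hΛ, ← hΛ, ← map_sub, hΛ]
    refine (Controls.norm_intervalIntegral_clm_apply_le (hM u₀ γ₀ hu₀ hγ₀) (u₁ - u₀)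
      (left_mem_Icc.2 (hr.1.trans hr.2)) hr).trans ?_
    rw [sub_zero, abs_of_nonneg hr.1]
    gcongr
    exacts [hr.1, sub_nonneg.2 (toReal_inv_le_one Fact.out), hr.2]
  exact (hγ₀.norm_sub_le hγ₁ hf hB u₀.integrableOn u₁.integrableOn
    (Controls.intervalIntegral_norm_le_of_norm_le (ht.1.trans ht.2) hu₁) hρ ht).trans_eq (by ring)

theorem tendstoUniformlyOn_of_weak_tendsto [FiniteDimensional ℝ E] (hp : 1 < p)
    (hf : LipschitzWith K f) (hB : LipschitzWith L B) {u : ℕ → Controls U p T}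
    {u₀ : Controls U p T} {γ : ℕ → ℝ → E} {γ₀ : ℝ → E}
    (hγ : ∀ k, IsAffineTrajectory f B x T (u k) (γ k)) (hγ₀ : IsAffineTrajectory f B x T u₀ γ₀)
    (hu : ∀ φ : Controls U p T →L[ℝ] ℝ, Tendsto (fun k => φ (u k)) atTop (𝓝 (φ u₀))) :
    TendstoUniformlyOn γ γ₀ atTop (Icc 0 T) := by
  obtain ⟨R, hR⟩ := exists_norm_le_of_weak_tendsto hu
  refine Metric.tendstoUniformlyOn_iff.2 fun ε hε => ?_
  obtain ⟨ρ, hρ₀, hρ⟩ :=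
    exists_pos_mul_lt hε (Real.exp (K * T + L * (R * T ^ (1 - p⁻¹.toReal))))
  filter_upwards [Metric.tendstoUniformlyOn_iff.1
    (Controls.tendstoUniformlyOn_intervalIntegral_clm_apply hp
      (hB.continuous.comp_continuousOn hγ₀.1) hu) ρ hρ₀] with k hk t ht
  rw [dist_comm, dist_eq_norm]
  refine (hγ₀.norm_sub_le (hγ k) hf hB u₀.integrableOn (u k).integrableOn
    (Controls.intervalIntegral_norm_le_of_norm_le (ht.1.trans ht.2) (hR k)) (fun r hr => ?_)
    ht).trans_lt ((mul_comm _ _).trans_lt hρ)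
  rw [← dist_eq_norm, dist_comm]
  exact (hk r hr).le

end IsAffineTrajectory

/-- `F` sends a control to the position at time `T` of a trajectory driven by it from `x`. -/
def IsEndpointMap (f : E → E) (B : E → U →L[ℝ] E) (x : E) (T : ℝ) (F : Controls U p T → E) :
    Prop :=
  ∀ u : Controls U p T, ∃ γ, IsAffineTrajectory f B x T u γ ∧ F u = γ T

namespace IsEndpointMap

variable {F : Controls U p T → E}

theorem exists_norm_second_difference_le (hF : IsEndpointMap f B x T F) (hT : 0 ≤ T)
    (hf : IsC11With K f) (hB : IsC11With L B) (R : ℝ) :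
    ∃ C, ∀ u v : Controls U p T, ‖u‖ ≤ R → ‖u + v‖ ≤ R → ‖u + (2 : ℝ) • v‖ ≤ R →
      ‖F (u + (2 : ℝ) • v) - (2 : ℝ) • F (u + v) + F u‖ ≤ C * ‖v‖ ^ 2 := by
  let θ : ℝ := 1 - p⁻¹.toReal
  obtain ⟨C, hC⟩ := IsAffineTrajectory.exists_norm_sub_le_mul_norm_sub (x := x) (p := p) (T := T)
    hf.lipschitzWith hB.lipschitzWith R
  refine ⟨(C ^ 2 * (K * T + L * (R * T ^ θ)) + 2 * L * C * T ^ θ) *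
    Real.exp (K * T + L * (R * T ^ θ)), fun u v hu₀ hu₁ hu₂ => ?_⟩
  obtain ⟨γ₀, hγ₀, hF₀⟩ := hF u
  obtain ⟨γ₁, hγ₁, hF₁⟩ := hF (u + v)
  obtain ⟨γ₂, hγ₂, hF₂⟩ := hF (u + (2 : ℝ) • v)
  have h₀₁ : ∀ t ∈ Icc 0 T, ‖γ₁ t - γ₀ t‖ ≤ C * ‖v‖ := by
    simpa using hC _ _ γ₀ γ₁ hu₀ hu₁ hγ₀ hγ₁
  have h₁₂ : ∀ t ∈ Icc 0 T, ‖γ₂ t - γ₁ t‖ ≤ C * ‖v‖ := by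
    have hv : u + (2 : ℝ) • v - (u + v) = v := by module
    simpa only [hv] using hC _ _ γ₁ γ₂ hu₁ hu₂ hγ₁ hγ₂
  have hu₁_eq : ∀ᵐ s, s ∈ Icc 0 T → (u + v) s = u s + v s :=
    (ae_restrict_iff' measurableSet_Icc).1 (Lp.coeFn_add u v)
  have hu₂_eq : ∀ᵐ s, s ∈ Icc 0 T → (u + (2 : ℝ) • v) s = u s + (2 : ℝ) • v s := by
    refine (ae_restrict_iff' measurableSet_Icc).1 ?_
    filter_upwards [Lp.coeFn_add u ((2 : ℝ) • v), Lp.coeFn_smul (2 : ℝ) v] with s hs hs'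
    rw [hs, Pi.add_apply, hs', Pi.smul_apply]
  rw [hF₀, hF₁, hF₂]
  exact (hγ₀.norm_second_difference_le hγ₁ hγ₂ hf hB u.integrableOn (u + v).integrableOn
    (u + (2 : ℝ) • v).integrableOn v.integrableOn hu₁_eq hu₂_eq
    (Controls.intervalIntegral_norm_le_of_norm_le hT hu₀)
    (Controls.intervalIntegral_norm_le_of_norm_le hT le_rfl) h₀₁ h₁₂
    (right_mem_Icc.2 hT)).trans_eq (by ring)

theorem tendsto_of_weak_tendsto [FiniteDimensional ℝ E] (hF : IsEndpointMap f B x T F)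
    (hp : 1 < p) (hT : 0 ≤ T) (hf : LipschitzWith K f) (hB : LipschitzWith L B)
    {u : ℕ → Controls U p T} {u₀ : Controls U p T}
    (hu : ∀ φ : Controls U p T →L[ℝ] ℝ, Tendsto (fun k => φ (u k)) atTop (𝓝 (φ u₀))) :
    Tendsto (fun k => F (u k)) atTop (𝓝 (F u₀)) := by
  choose γ hγ hFγ using hF
  simp only [hFγ]
  exact (IsAffineTrajectory.tendstoUniformlyOn_of_weak_tendsto hp hf hB (fun k => hγ (u k)) (hγ u₀)
    hu).tendsto_at (right_mem_Icc.2 hT)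

end IsEndpointMap

theorem stmt13_general [FiniteDimensional ℝ E] (hp : 1 < p) (hT : 0 ≤ T)
    (hf : ∃ K, IsC11With K f) (hB : ∃ L, IsC11With L B) {F : Controls U p T → E}
    (hF : IsEndpointMap f B x T F) {D : Controls U p T → Controls U p T →L[ℝ] E}
    (hD : ∀ w, HasFDerivAt F (D w) w) {u : ℕ → Controls U p T} {u₀ : Controls U p T}
    (hu : ∀ φ : Controls U p T →L[ℝ] ℝ, Tendsto (fun k => φ (u k)) atTop (𝓝 (φ u₀)))
    (v : Controls U p T) : Tendsto (fun k => D (u k) v) atTop (𝓝 (D u₀ v)) := by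
  obtain ⟨K, hf⟩ := hf
  obtain ⟨L, hB⟩ := hB
  obtain ⟨R, hR⟩ := exists_norm_le_of_weak_tendsto hu
  obtain ⟨C, hC⟩ := hF.exists_norm_second_difference_le hT hf hB (R + 2 * ‖v‖)
  have hball : ∀ k, ∀ s ∈ Icc (0 : ℝ) 2, ‖u k + s • v‖ ≤ R + 2 * ‖v‖ := by
    intro k s hs
    refine norm_add_le_of_le (hR k) ?_
    rw [norm_smul, Real.norm_of_nonneg hs.1]
    gcongr
    exact hs.2
  refine tendsto_fderiv_apply_of_second_difference (C := C * ‖v‖ ^ 2) hD (fun k t ht => ?_)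
    fun t => ?_
  · have hk := hC (u k) (t • v) (by simpa using hball k 0 (by simp))
      (hball k t ⟨ht.1.le, ht.2.trans one_le_two⟩)
      (by rw [smul_smul]; exact hball k (2 * t) ⟨by linarith [ht.1], by linarith [ht.2]⟩)
    rw [smul_smul, norm_smul, mul_pow, Real.norm_eq_abs, sq_abs] at hk
    exact hk.trans_eq (by ring)
  · refine hF.tendsto_of_weak_tendsto hp hT hf.lipschitzWith hB.lipschitzWith fun φ => ?_
    simpa only [map_add] using (hu φ).add_const (φ (t • v))

end Endpoint

section InputOperator

variable {E : Type*} [NormedAddCommGroup E] [NormedSpace ℝ E] {d : ℕ}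

/-- The input operator `w ↦ ∑ i, w i • X i y` of the vector fields `X`, which casts the system
`γ' = X₀ γ + ∑ i, u i • X i γ` in control-affine form. -/
def inputOperator (X : Fin d → E → E) (y : E) : EuclideanSpace ℝ (Fin d) →L[ℝ] E :=
  ∑ i, (EuclideanSpace.proj i).smulRight (X i y)

theorem exists_isC11With_inputOperator {X : Fin d → E → E} (hX : ∀ i, ContDiff ℝ 2 (X i))
    (h₁ : ∃ C, ∀ i y, ‖fderiv ℝ (X i) y‖ ≤ C)
    (h₂ : ∃ C, ∀ i y, ‖fderiv ℝ (fderiv ℝ (X i)) y‖ ≤ C) : ∃ L, IsC11With L (inputOperator X) := by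
  choose K hK using fun i =>
    exists_isC11With (hX i) (h₁.imp fun _ hC => hC i) (h₂.imp fun _ hC => hC i)
  exact ⟨_, IsC11With.sum fun i _ =>
    (hK i).clm_comp (ContinuousLinearMap.smulRightL ℝ _ E (EuclideanSpace.proj i))⟩

end InputOperator

theorem IsTrajectory.isAffineTrajectory {n d : ℕ}
    {X0 : EuclideanSpace ℝ (Fin n) → EuclideanSpace ℝ (Fin n)}
    {X : Fin d → EuclideanSpace ℝ (Fin n) → EuclideanSpace ℝ (Fin n)}
    {x : EuclideanSpace ℝ (Fin n)} {T : ℝ} {u : ℝ → EuclideanSpace ℝ (Fin d)}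
    {γ : ℝ → EuclideanSpace ℝ (Fin n)} (hγ : IsTrajectory X0 X x T u γ) :
    IsAffineTrajectory X0 (inputOperator X) x T u γ := by
  simpa [IsTrajectory, IsAffineTrajectory, controlField, inputOperator] using hγ

/-- if `u_k ⇀ u` weakly in `L^p([0,T],ℝ^d)`, then the differentials of
the endpoint map `F(u) = γ_u(T)` satisfy `d_{u_k}F(v) → d_uF(v)` for every `v`. -/
theorem stmt13 (n d : ℕ) (p : ℝ) (hp : 1 < p) [Fact (1 ≤ ENNReal.ofReal p)]
    (T : ℝ) (hT : 0 < T) (x : EuclideanSpace ℝ (Fin n))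
    (X0 : EuclideanSpace ℝ (Fin n) → EuclideanSpace ℝ (Fin n))
    (X : Fin d → EuclideanSpace ℝ (Fin n) → EuclideanSpace ℝ (Fin n))
    (hX0smooth : ContDiff ℝ (⊤ : ℕ∞) X0) (hXsmooth : ∀ i, ContDiff ℝ (⊤ : ℕ∞) (X i))
    (hX0bdd : ∃ C, ∀ y, ‖X0 y‖ ≤ C) (hXbdd : ∃ C, ∀ i y, ‖X i y‖ ≤ C)
    (hX0der : ∃ C, ∀ y, ‖fderiv ℝ X0 y‖ ≤ C)
    (hXder : ∃ C, ∀ i y, ‖fderiv ℝ (X i) y‖ ≤ C)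
    (hX0der2 : ∃ C, ∀ y, ‖fderiv ℝ (fderiv ℝ X0) y‖ ≤ C)
    (hXder2 : ∃ C, ∀ i y, ‖fderiv ℝ (fderiv ℝ (X i)) y‖ ≤ C)
    (F : Lp (EuclideanSpace ℝ (Fin d)) (ENNReal.ofReal p)
        (volume.restrict (Set.Icc (0:ℝ) T)) → EuclideanSpace ℝ (Fin n))
    (hF : ∀ u : Lp (EuclideanSpace ℝ (Fin d)) (ENNReal.ofReal p)
        (volume.restrict (Set.Icc (0:ℝ) T)),
      ∃ γ, IsTrajectory X0 X x T (⇑u) γ ∧ F u = γ T)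
    (D : Lp (EuclideanSpace ℝ (Fin d)) (ENNReal.ofReal p)
        (volume.restrict (Set.Icc (0:ℝ) T)) →
      (Lp (EuclideanSpace ℝ (Fin d)) (ENNReal.ofReal p)
        (volume.restrict (Set.Icc (0:ℝ) T)) →L[ℝ] EuclideanSpace ℝ (Fin n)))
    (hD : ∀ w, HasFDerivAt F (D w) w)
    (u : ℕ → Lp (EuclideanSpace ℝ (Fin d)) (ENNReal.ofReal p)
      (volume.restrict (Set.Icc (0:ℝ) T)))
    (ulim : Lp (EuclideanSpace ℝ (Fin d)) (ENNReal.ofReal p)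
      (volume.restrict (Set.Icc (0:ℝ) T)))
    (hweak : ∀ φ : Lp (EuclideanSpace ℝ (Fin d)) (ENNReal.ofReal p)
        (volume.restrict (Set.Icc (0:ℝ) T)) →L[ℝ] ℝ,
      Tendsto (fun k => φ (u k)) atTop (𝓝 (φ ulim))) :
    ∀ v, Tendsto (fun k => D (u k) v) atTop (𝓝 (D ulim v)) := by
  exact stmt13_general (by simpa using hp) hT.le
    (exists_isC11With (contDiff_infty.1 hX0smooth 2) hX0der hX0der2)
    (exists_isC11With_inputOperator (fun i => contDiff_infty.1 (hXsmooth i) 2) hXder hXder2)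
    (fun w => (hF w).imp fun _ hγ => ⟨hγ.1.isAffineTrajectory, hγ.2⟩) hD hweak
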